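/- arXiv:1812.05261 — 2 statements merged into one kernel-verified Lean document; each statement's English description precedes it below -/
import Mathlib

section
/- Let m, n be positive integers. A nonempty subset I of the product poset Fin m × Fin n is an interval (convex and connected) if and only if there exist integers 1 ≤ s ≤ t ≤ m and a staircase, i.e., integers b_i, d_i for s ≤ i ≤ t with 1 ≤ b_i ≤ d_i ≤ n and b_{i+1} ≤ b_i ≤ d_{i+1} ≤ d_i for all s ≤ i ≤ t−1, such that I = {(i, j) | s ≤ i ≤ t, b_i ≤ j ≤ d_i}. Moreover, this staircase is uniquely determined by I, so the set of intervals of Fin m × Fin n is in bijection with the set of staircases. -/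
open Classical

variable {P : Type} [PartialOrder P]

/-- Convexity of a subset of a poset. -/
def IsConvexSet (I : Set P) : Prop :=
  ∀ ⦃a b c : P⦄, a ∈ I → c ∈ I → a ≤ b → b ≤ c → b ∈ I

/-- Connectedness of a subset of a poset: any two elements are joined by a
sequence inside the subset in which consecutive elements are comparable. -/
def IsConnectedSet (I : Set P) : Prop :=
  ∀ a ∈ I, ∀ b ∈ I,
    Relation.ReflTransGen (fun u v : P => u ∈ I ∧ v ∈ I ∧ (u ≤ v ∨ v ≤ u)) a b

/-- An interval of a poset: a nonempty, convex and connected subset. -/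
def IsIntervalSet (I : Set P) : Prop :=
  I.Nonempty ∧ IsConvexSet I ∧ IsConnectedSet I

/-- The subset of the grid determined by a family of slices: row `i` carries
the slice `[b_i, d_i]` when `c i = some (b_i, d_i)`, and is empty when
`c i = none`. -/
def staircaseSet {m n : ℕ} (c : Fin m → Option (Fin n × Fin n)) :
    Set (Fin m × Fin n) :=
  {p | ∃ bd : Fin n × Fin n, c p.1 = some bd ∧ bd.1 ≤ p.2 ∧ p.2 ≤ bd.2}

/-- A staircase: a nonempty contiguous range of rows, each carrying a slice
`[b_i, d_i]` with `b_i ≤ d_i`, such that consecutive slices satisfy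
`b_{i+1} ≤ b_i ≤ d_{i+1} ≤ d_i`. -/
def IsStaircase {m n : ℕ} (c : Fin m → Option (Fin n × Fin n)) : Prop :=
  (∃ i, c i ≠ none) ∧
  (∀ i₁ i₂ i₃ : Fin m, i₁ ≤ i₂ → i₂ ≤ i₃ → c i₁ ≠ none → c i₃ ≠ none →
    c i₂ ≠ none) ∧
  (∀ (i : Fin m) (bd : Fin n × Fin n), c i = some bd → bd.1 ≤ bd.2) ∧
  (∀ (i i' : Fin m) (bd bd' : Fin n × Fin n), (i' : ℕ) = (i : ℕ) + 1 →
    c i = some bd → c i' = some bd' →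
      bd'.1 ≤ bd.1 ∧ bd.1 ≤ bd'.2 ∧ bd'.2 ≤ bd.2)

/-!
An interval is recovered from the least and greatest elements of its rows: by convexity each row is
the slice between them. Along a path joining two rows of a connected set, some single comparability
step `u ≤ v` passes from rows `≤ k` to rows `> k`, and by convexity the column of `u` then meets
every row between `u` and `v`. Hence the rows that occur are contiguous, and two consecutive ones
share a column, from which convexity gives the staircase inequalities. Conversely, the bounds of a
staircase decrease from row to row, which gives convexity, and `b_i ≤ d_{i+1}` lets one step from
`(i, b_i)` up to `(i + 1, b_i)`, which gives connectedness.
-/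

section Poset

/-- The steps of the paths in `IsConnectedSet`: both points lie in `I` and they are comparable. -/
def ComparableIn (I : Set P) (u v : P) : Prop :=
  u ∈ I ∧ v ∈ I ∧ (u ≤ v ∨ v ≤ u)

instance comparableIn_stdSymm (I : Set P) : Std.Symm (ComparableIn I) where
  symm _ _ h := ⟨h.2.1, h.1, h.2.2.symm⟩

theorem exists_le_crossing_of_reflTransGen {I U : Set P} (hU : IsUpperSet U) {a b : P}
    (hab : Relation.ReflTransGen (ComparableIn I) a b) (ha : a ∉ U) (hb : b ∈ U) :
    ∃ u ∈ I, ∃ v ∈ I, u ≤ v ∧ u ∉ U ∧ v ∈ U := by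
  induction hab with
  | refl => exact absurd hb ha
  | @tail u v _ huv ih =>
    by_cases hu : u ∈ U
    · exact ih hu
    · obtain ⟨huI, hvI, hle | hle⟩ := huv
      · exact ⟨u, huI, v, hvI, hle, hu, hb⟩
      · exact absurd (hU hle hb) hu

end Poset

section ConvexProduct

variable {α β : Type} [PartialOrder α] [PartialOrder β] {I : Set (α × β)} {i i' : α}

theorem IsConvexSet.ordConnected_row (hI : IsConvexSet I) (i : α) :
    (Prod.mk i ⁻¹' I).OrdConnected :=
  ⟨fun _ hj _ hj' _ hk => hI hj hj' (Prod.mk_le_mk_iff_right.2 hk.1)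
    (Prod.mk_le_mk_iff_right.2 hk.2)⟩

theorem IsConvexSet.mk_mem_of_le {u v : α × β} (hI : IsConvexSet I) (hu : u ∈ I) (hv : v ∈ I)
    (huv : u ≤ v) (hui : u.1 ≤ i) (hiv : i ≤ v.1) : (i, u.2) ∈ I :=
  hI hu hv ⟨hui, le_rfl⟩ ⟨hiv, huv.2⟩

theorem IsConvexSet.row_bounds_of_common_column (hI : IsConvexSet I) (hii' : i ≤ i') {j : β}
    (hj : (i, j) ∈ I) (hj' : (i', j) ∈ I) {b d b' d' : β}
    (hb : IsLeast (Prod.mk i ⁻¹' I) b) (hd : IsGreatest (Prod.mk i ⁻¹' I) d)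
    (hb' : IsLeast (Prod.mk i' ⁻¹' I) b') (hd' : IsGreatest (Prod.mk i' ⁻¹' I) d') :
    b' ≤ b ∧ b ≤ d' ∧ d' ≤ d := by
  have lower_mem : (i', b) ∈ I := hI hb.1 hj' ⟨hii', le_rfl⟩ ⟨le_rfl, hb.2 hj⟩
  have upper_mem : (i, d') ∈ I := hI hj hd'.1 ⟨le_rfl, hd'.2 hj'⟩ ⟨hii', le_rfl⟩
  exact ⟨hb'.2 lower_mem, hd'.2 lower_mem, hd.2 upper_mem⟩

end ConvexProduct

section IntervalProduct

variable {α β : Type} [LinearOrder α] [PartialOrder β] {I : Set (α × β)} {p q : α × β}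

theorem IsConnectedSet.exists_le_crossing_row (hI : IsConnectedSet I) (hp : p ∈ I) (hq : q ∈ I)
    {k : α} (hpk : p.1 ≤ k) (hkq : k < q.1) : ∃ u ∈ I, ∃ v ∈ I, u ≤ v ∧ u.1 ≤ k ∧ k < v.1 := by
  have hU : IsUpperSet {r : α × β | k < r.1} := fun _ _ hle hk => lt_of_lt_of_le hk hle.1
  obtain ⟨u, hu, v, hv, huv, huk, hkv⟩ :=
    exists_le_crossing_of_reflTransGen hU (hI p hp q hq) hpk.not_gt hkq
  exact ⟨u, hu, v, hv, huv, not_lt.1 huk, hkv⟩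

theorem IsIntervalSet.ordConnected_image_fst (hI : IsIntervalSet I) :
    (Prod.fst '' I).OrdConnected := by
  refine ⟨?_⟩
  rintro _ ⟨p, hp, rfl⟩ _ ⟨q, hq, rfl⟩ k ⟨hpk, hkq⟩
  rcases hkq.eq_or_lt with rfl | hkq
  · exact ⟨q, hq, rfl⟩
  · obtain ⟨u, hu, v, hv, huv, huk, hkv⟩ := hI.2.2.exists_le_crossing_row hp hq hpk hkq
    exact ⟨(k, u.2), hI.2.1.mk_mem_of_le hu hv huv huk hkv.le, rfl⟩

theorem IsIntervalSet.exists_common_column (hI : IsIntervalSet I) (hp : p ∈ I) (hq : q ∈ I)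
    (hpq : p.1 ⋖ q.1) : ∃ j, (p.1, j) ∈ I ∧ (q.1, j) ∈ I := by
  obtain ⟨u, hu, v, hv, huv, hup, hpv⟩ := hI.2.2.exists_le_crossing_row hp hq le_rfl hpq.lt
  exact ⟨u.2, hI.2.1.mk_mem_of_le hu hv huv hup hpv.le,
    hI.2.1.mk_mem_of_le hu hv huv (hup.trans hpq.le) (hpq.ge_of_gt hpv)⟩

end IntervalProduct

section RowBounds

variable {α β : Type}

/-- The pair of the least and greatest elements of row `i` of `I`, or `none` if the row does not
have both. On intervals this is the inverse of `staircaseSet`. -/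
noncomputable def rowBounds [PartialOrder β] (I : Set (α × β)) (i : α) : Option (β × β) :=
  if h : ∃ bd : β × β, IsLeast (Prod.mk i ⁻¹' I) bd.1 ∧ IsGreatest (Prod.mk i ⁻¹' I) bd.2 then
    some h.choose
  else none

theorem rowBounds_eq_some_iff [PartialOrder β] {I : Set (α × β)} {i : α} {bd : β × β} :
    rowBounds I i = some bd ↔
      IsLeast (Prod.mk i ⁻¹' I) bd.1 ∧ IsGreatest (Prod.mk i ⁻¹' I) bd.2 := by
  unfold rowBounds
  split_ifs with h
  · obtain ⟨hleast, hgreatest⟩ := h.choose_spec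
    rw [Option.some_inj]
    exact ⟨fun heq => heq ▸ h.choose_spec,
      fun hbd => Prod.ext (hleast.unique hbd.1) (hgreatest.unique hbd.2)⟩
  · exact ⟨nofun, fun hbd => absurd ⟨bd, hbd⟩ h⟩

theorem rowBounds_ne_none_iff [LinearOrder β] [Finite β] {I : Set (α × β)} {i : α} :
    rowBounds I i ≠ none ↔ i ∈ Prod.fst '' I := by
  rw [Option.ne_none_iff_exists']
  constructor
  · rintro ⟨bd, hbd⟩
    exact ⟨(i, bd.1), (rowBounds_eq_some_iff.1 hbd).1.1, rfl⟩
  · rintro ⟨⟨i, j⟩, hj, rfl⟩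
    have hne : (Prod.mk i ⁻¹' I).Nonempty := ⟨j, hj⟩
    obtain ⟨b, hb⟩ := Set.exists_min_image _ id (Set.toFinite _) hne
    obtain ⟨d, hd⟩ := Set.exists_max_image _ id (Set.toFinite _) hne
    exact ⟨(b, d), rowBounds_eq_some_iff.2 ⟨hb, hd⟩⟩

end RowBounds

section OptionFamily

variable {m : ℕ} {γ : Type*} {c : Fin m → Option γ} {i i' : Fin m} {x x' : γ}

theorem le_induction_of_ordConnected_ne_none (hc : {i | c i ≠ none}.OrdConnected)
    {motive : Fin m → γ → Prop} (hi : c i = some x) (base : motive i x)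
    (step : ∀ (k k' : Fin m) (y y' : γ), (k' : ℕ) = k + 1 → c k = some y → c k' = some y' →
      motive k y → motive k' y')
    (hii' : i ≤ i') (hi' : c i' = some x') : motive i' x' := by
  suffices h : ∀ l : ℕ, i ≤ l → ∀ (hl : l < m) y, c ⟨l, hl⟩ = some y → motive ⟨l, hl⟩ y from
    h i' hii' i'.2 x' hi'
  intro l hil
  induction l, hil using Nat.le_induction with
  | base =>
    intro _ y hy
    obtain rfl : x = y := Option.some_inj.1 (hi.symm.trans hy)
    exact base
  | succ l hil ih =>
    intro hl y' hy'
    have hl_ne : c ⟨l, Nat.lt_of_succ_lt hl⟩ ≠ none :=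
      hc.out (Option.ne_none_iff_exists'.2 ⟨x, hi⟩) (Option.ne_none_iff_exists'.2 ⟨y', hy'⟩)
        ⟨hil, Nat.le_succ l⟩
    obtain ⟨y, hy⟩ := Option.ne_none_iff_exists'.1 hl_ne
    exact step _ _ y y' rfl hy hy' (ih _ y hy)

end OptionFamily

section Staircase

variable {m n : ℕ} {I : Set (Fin m × Fin n)} {c : Fin m → Option (Fin n × Fin n)}
  {i i' : Fin m} {bd bd' : Fin n × Fin n}

theorem preimage_mk_staircaseSet (h : c i = some bd) :
    Prod.mk i ⁻¹' staircaseSet c = Set.Icc bd.1 bd.2 := by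
  ext j
  constructor
  · rintro ⟨x, hx, hj⟩
    obtain rfl : x = bd := Option.some_inj.1 (hx.symm.trans h)
    exact hj
  · exact fun hj => ⟨bd, h, hj⟩

theorem rowBounds_staircaseSet (hle : ∀ i bd, c i = some bd → bd.1 ≤ bd.2) :
    rowBounds (staircaseSet c) = c := by
  funext i
  rcases hi : c i with _ | bd
  · by_contra hne
    obtain ⟨⟨i, j⟩, ⟨bd, hbd, -⟩, rfl⟩ := rowBounds_ne_none_iff.1 hne
    exact Option.some_ne_none bd (hbd.symm.trans hi)
  · rw [rowBounds_eq_some_iff, preimage_mk_staircaseSet hi]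
    exact ⟨isLeast_Icc (hle i bd hi), isGreatest_Icc (hle i bd hi)⟩

theorem staircaseSet_rowBounds (hI : IsConvexSet I) : staircaseSet (rowBounds I) = I := by
  ext ⟨i, j⟩
  constructor
  · rintro ⟨bd, hbd, hj⟩
    obtain ⟨hleast, hgreatest⟩ := rowBounds_eq_some_iff.1 hbd
    exact (hI.ordConnected_row i).out hleast.1 hgreatest.1 hj
  · intro hj
    obtain ⟨bd, hbd⟩ :=
      Option.ne_none_iff_exists'.1 (rowBounds_ne_none_iff.2 ⟨(i, j), hj, rfl⟩)
    obtain ⟨hleast, hgreatest⟩ := rowBounds_eq_some_iff.1 hbd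
    exact ⟨bd, hbd, hleast.2 hj, hgreatest.2 hj⟩

theorem IsIntervalSet.isStaircase_rowBounds (hI : IsIntervalSet I) :
    IsStaircase (rowBounds I) := by
  simp only [IsStaircase, rowBounds_ne_none_iff, rowBounds_eq_some_iff]
  refine ⟨hI.1.image Prod.fst, fun _ _ _ h₁₂ h₂₃ h₁ h₃ =>
    hI.ordConnected_image_fst.out h₁ h₃ ⟨h₁₂, h₂₃⟩, fun _ _ h => h.1.2 h.2.1, ?_⟩
  rintro i i' bd bd' hii' ⟨hb, hd⟩ ⟨hb', hd'⟩
  have hcov : i ⋖ i' := Fin.covBy_iff.2 (Nat.covBy_iff_add_one_eq.2 hii'.symm)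
  obtain ⟨j, hj, hj'⟩ := hI.exists_common_column hb.1 hb'.1 hcov
  exact hI.2.1.row_bounds_of_common_column hcov.le hj hj' hb hd hb' hd'

namespace IsStaircase

theorem lower_mem (hc : IsStaircase c) (hi : c i = some bd) : (i, bd.1) ∈ staircaseSet c :=
  ⟨bd, hi, le_rfl, hc.2.2.1 i bd hi⟩

theorem ordConnected_ne_none (hc : IsStaircase c) : {i | c i ≠ none}.OrdConnected :=
  ⟨fun _ h₁ _ h₃ _ h₂ => hc.2.1 _ _ _ h₂.1 h₂.2 h₁ h₃⟩

theorem bounds_le_of_le (hc : IsStaircase c) (hi : c i = some bd) (hi' : c i' = some bd')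
    (hii' : i ≤ i') : bd' ≤ bd := by
  refine le_induction_of_ordConnected_ne_none hc.ordConnected_ne_none
    (motive := fun _ x => x ≤ bd) hi le_rfl ?_ hii' hi'
  intro k k' x x' hkk' hk hk' hx
  obtain ⟨hlower, -, hupper⟩ := hc.2.2.2 k k' x x' hkk' hk hk'
  exact le_trans ⟨hlower, hupper⟩ hx

theorem reflTransGen_lower_of_le (hc : IsStaircase c) (hi : c i = some bd)
    (hi' : c i' = some bd') (hii' : i ≤ i') :
    Relation.ReflTransGen (ComparableIn (staircaseSet c)) (i, bd.1) (i', bd'.1) := by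
  refine le_induction_of_ordConnected_ne_none hc.ordConnected_ne_none (motive := fun k x =>
    Relation.ReflTransGen (ComparableIn (staircaseSet c)) (i, bd.1) (k, x.1)) hi .refl ?_ hii' hi'
  intro k k' x x' hkk' hk hk' path
  obtain ⟨hlower, hoverlap, -⟩ := hc.2.2.2 k k' x x' hkk' hk hk'
  have corner_mem : (k', x.1) ∈ staircaseSet c := ⟨x', hk', hlower, hoverlap⟩
  have hle : k ≤ k' := Fin.le_def.2 (by omega)
  exact (path.tail ⟨hc.lower_mem hk, corner_mem, .inl ⟨hle, le_rfl⟩⟩).tail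
    ⟨corner_mem, hc.lower_mem hk', .inr ⟨le_rfl, hlower⟩⟩

theorem isConvexSet_staircaseSet (hc : IsStaircase c) : IsConvexSet (staircaseSet c) := by
  rintro p q r ⟨x, hx, hxp, -⟩ ⟨z, hz, -, hrz⟩ hpq hqr
  obtain ⟨y, hy⟩ := Option.ne_none_iff_exists'.1
    (hc.ordConnected_ne_none.out (Option.ne_none_iff_exists'.2 ⟨x, hx⟩)
      (Option.ne_none_iff_exists'.2 ⟨z, hz⟩) ⟨hpq.1, hqr.1⟩)
  have hyx : y ≤ x := hc.bounds_le_of_le hx hy hpq.1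
  have hzy : z ≤ y := hc.bounds_le_of_le hy hz hqr.1
  exact ⟨y, hy, hyx.1.trans (hxp.trans hpq.2), hqr.2.trans (hrz.trans hzy.2)⟩

theorem isConnectedSet_staircaseSet (hc : IsStaircase c) : IsConnectedSet (staircaseSet c) := by
  suffices h : ∀ p ∈ staircaseSet c, ∀ q ∈ staircaseSet c, p.1 ≤ q.1 →
      Relation.ReflTransGen (ComparableIn (staircaseSet c)) p q by
    intro p hp q hq
    rcases le_total p.1 q.1 with hpq | hqp
    · exact h p hp q hq hpq
    · exact symm_of (Relation.ReflTransGen (ComparableIn (staircaseSet c))) (h q hq p hp hqp)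
  rintro p ⟨x, hx, hxp, hpx⟩ q ⟨y, hy, hyq, hqy⟩ hpq
  have start : ComparableIn (staircaseSet c) p (p.1, x.1) :=
    ⟨⟨x, hx, hxp, hpx⟩, hc.lower_mem hx, .inr ⟨le_rfl, hxp⟩⟩
  have finish : ComparableIn (staircaseSet c) (q.1, y.1) q :=
    ⟨hc.lower_mem hy, ⟨y, hy, hyq, hqy⟩, .inl ⟨le_rfl, hyq⟩⟩
  exact .head start ((hc.reflTransGen_lower_of_le hx hy hpq).tail finish)

theorem isIntervalSet_staircaseSet (hc : IsStaircase c) : IsIntervalSet (staircaseSet c) := by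
  obtain ⟨i, hi⟩ := hc.1
  obtain ⟨bd, hbd⟩ := Option.ne_none_iff_exists'.1 hi
  exact ⟨⟨_, hc.lower_mem hbd⟩, hc.isConvexSet_staircaseSet, hc.isConnectedSet_staircaseSet⟩

end IsStaircase

end Staircase

/-- A subset of the product poset `Fin m × Fin n` is an interval
if and only if it is the set determined by a (unique) staircase. -/
theorem interval_iff_unique_staircase (m n : ℕ) (hm : 0 < m) (hn : 0 < n)
    (I : Set (Fin m × Fin n)) :
    IsIntervalSet I ↔
      ∃! c : Fin m → Option (Fin n × Fin n), IsStaircase c ∧ I = staircaseSet c := by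
  constructor
  · intro hI
    refine ⟨rowBounds I, ⟨hI.isStaircase_rowBounds, (staircaseSet_rowBounds hI.2.1).symm⟩, ?_⟩
    rintro c ⟨hc, rfl⟩
    exact (rowBounds_staircaseSet hc.2.2.1).symm
  · rintro ⟨c, ⟨hc, rfl⟩, -⟩
    exact hc.isIntervalSet_staircaseSet
end

section
/- For every positive integer n, the number of intervals of the product poset Fin 2 × Fin n equals n(n+1)(n² + 5n + 30)/24. -/
open Classical

variable {P : Type} [PartialOrder P]

/-!
The bottom and top rows of a convex set `I ⊆ Fin 2 × α`, with `α` a finite chain, are closed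
intervals or empty. If one row is empty, `I` is given by a row and a pair `a ≤ b` in `α`. If the
rows are `[a, b]` (bottom) and `[c, d]` (top), then connectedness forces `a ≤ d`, after which
convexity forces `c ≤ a` and `d ≤ b`; conversely every chain `c ≤ a ≤ d ≤ b` gives an interval.
Weakly increasing `k`-tuples in `α` correspond to multisets of size `k`, so with `n = |α|` there are
`2 * (n + 1).choose 2 + (n + 3).choose 4` intervals.
-/

open Set

section Multichain

variable {α : Type*} {k : ℕ}

/-- The multiset of values of a weakly increasing `k`-tuple (a multichain of length `k`), as an
element of the symmetric power. -/
def multichainToSym [PartialOrder α] (f : Fin k →o α) : Sym α k :=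
  ⟨List.ofFn f, by simp⟩

lemma multichainToSym_injective [PartialOrder α] :
    Function.Injective (multichainToSym (α := α) (k := k)) := by
  intro f g h
  have hperm : (List.ofFn f).Perm (List.ofFn g) := Multiset.coe_eq_coe.1 (congrArg Subtype.val h)
  have hlist : List.ofFn f = List.ofFn g :=
    hperm.eq_of_sortedLE f.monotone.sortedLE_ofFn g.monotone.sortedLE_ofFn
  exact DFunLike.coe_injective (List.ofFn_injective hlist)

lemma multichainToSym_surjective [LinearOrder α] :
    Function.Surjective (multichainToSym (α := α) (k := k)) := by
  rintro ⟨s, hs⟩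
  have hlen : s.sort.length = k := by simpa using hs
  subst hlen
  refine ⟨⟨s.sort.get, (s.pairwise_sort (· ≤ ·)).sortedLE.monotone_get⟩, Subtype.ext ?_⟩
  change (List.ofFn s.sort.get : Multiset α) = s
  rw [List.ofFn_get, s.sort_eq]

lemma natCard_fin_orderHom [LinearOrder α] [Finite α] :
    Nat.card (Fin k →o α) = (Nat.card α).multichoose k := by
  cases nonempty_fintype α
  rw [Nat.card_eq_of_bijective _ ⟨multichainToSym_injective (α := α), multichainToSym_surjective⟩,
    Nat.card_eq_fintype_card, Nat.card_eq_fintype_card, Sym.card_sym_eq_multichoose]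

end Multichain

lemma factorial_mul_multichoose (n k : ℕ) :
    k.factorial * n.multichoose k = n.ascFactorial k := by
  rw [Nat.multichoose_eq, Nat.ascFactorial_eq_factorial_mul_choose']

lemma isConvexSet_iff_ordConnected {I : Set P} : IsConvexSet I ↔ I.OrdConnected :=
  ⟨fun h ↦ ⟨fun _ ha _ hc _ hb ↦ h ha hc hb.1 hb.2⟩, fun h _ _ _ ha hc hab hbc ↦
    h.out ha hc ⟨hab, hbc⟩⟩

lemma isConnectedSet_of_forall_le_or_le {I : Set P} {u v : P} (hu : u ∈ I) (hv : v ∈ I)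
    (huv : u ≤ v) (h : ∀ p ∈ I, u ≤ p ∨ p ≤ v) : IsConnectedSet I := by
  let r : P → P → Prop := fun x y ↦ x ∈ I ∧ y ∈ I ∧ (x ≤ y ∨ y ≤ x)
  have : Std.Symm r := ⟨fun _ _ hxy ↦ ⟨hxy.2.1, hxy.1, hxy.2.2.symm⟩⟩
  have path_to_u : ∀ p ∈ I, Relation.ReflTransGen r p u := by
    intro p hp
    obtain hup | hpv := h p hp
    · exact .single ⟨hp, hu, .inr hup⟩
    · exact .tail (.single ⟨hp, hv, .inl hpv⟩) ⟨hv, hu, .inr huv⟩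
  exact fun a ha b hb ↦ (path_to_u a ha).trans (symm (path_to_u b hb))

lemma isIntervalSet_Icc {a b : P} (hab : a ≤ b) : IsIntervalSet (Icc a b) :=
  ⟨nonempty_Icc.2 hab, isConvexSet_iff_ordConnected.2 ordConnected_Icc,
    isConnectedSet_of_forall_le_or_le (left_mem_Icc.2 hab) (left_mem_Icc.2 hab) le_rfl
      fun _ hp ↦ .inl hp.1⟩

lemma IsConnectedSet.exists_comparable_of_mem_of_notMem {I U : Set P} (hI : IsConnectedSet I)
    {a b : P} (ha : a ∈ I) (hb : b ∈ I) (haU : a ∈ U) (hbU : b ∉ U) :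
    ∃ u ∈ I, ∃ v ∈ I, u ∈ U ∧ v ∉ U ∧ (u ≤ v ∨ v ≤ u) := by
  by_contra! hsep
  suffices reach_U : ∀ p, Relation.ReflTransGen
      (fun u v : P ↦ u ∈ I ∧ v ∈ I ∧ (u ≤ v ∨ v ≤ u)) a p → p ∈ U from
    hbU (reach_U b (hI a ha b hb))
  intro p hp
  induction hp with
  | refl => exact haU
  | @tail u v _ huv hu =>
    obtain ⟨huI, hvI, hcomp⟩ := huv
    by_contra hv
    exact not_or.2 (hsep u huI v hvI hu hv) hcomp

lemma exists_eq_Icc_of_ordConnected {α : Type*} [LinearOrder α] [Finite α] {s : Set α}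
    (hs : s.OrdConnected) (hne : s.Nonempty) : ∃ a b, a ≤ b ∧ s = Icc a b := by
  obtain ⟨a, ha, hmin⟩ := s.exists_min_image id s.toFinite hne
  obtain ⟨b, hb, hmax⟩ := s.exists_max_image id s.toFinite hne
  exact ⟨a, b, hmin b hb, Subset.antisymm (fun x hx ↦ ⟨hmin x hx, hmax x hx⟩) (hs.out ha hb)⟩

lemma eq_of_forall_mk_preimage_eq {ι α : Type*} {I J : Set (ι × α)}
    (h : ∀ i, Prod.mk i ⁻¹' I = Prod.mk i ⁻¹' J) : I = J := by
  ext ⟨i, x⟩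
  exact Set.ext_iff.1 (h i) x

section RowInterval

variable {ι α : Type} [PartialOrder ι] [PartialOrder α]

/-- The interval of `ι × α` lying in the single row `i` with endpoints `f 0 ≤ f 1`. -/
def rowInterval (i : ι) (f : Fin 2 →o α) : Set (ι × α) :=
  Icc (i, f 0) (i, f 1)

lemma isIntervalSet_rowInterval (i : ι) (f : Fin 2 →o α) : IsIntervalSet (rowInterval i f) :=
  isIntervalSet_Icc ⟨le_rfl, f.monotone zero_le_one⟩

lemma mk_preimage_rowInterval_self (i : ι) (f : Fin 2 →o α) :
    Prod.mk i ⁻¹' rowInterval i f = Icc (f 0) (f 1) := by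
  ext x
  simp [rowInterval]

lemma mk_preimage_rowInterval_of_ne {i j : ι} (hij : i ≠ j) (f : Fin 2 →o α) :
    Prod.mk j ⁻¹' rowInterval i f = ∅ := by
  ext x
  simp only [rowInterval, mem_preimage, mem_Icc, Prod.mk_le_mk, mem_empty_iff_false, iff_false]
  exact fun h ↦ hij (le_antisymm h.1.1 h.2.1)

lemma rowInterval_injective :
    Function.Injective fun p : ι × (Fin 2 →o α) ↦ rowInterval p.1 p.2 := by
  rintro ⟨i, f⟩ ⟨j, g⟩ (h : rowInterval i f = rowInterval j g)
  have hf : f 0 ≤ f 1 := f.monotone zero_le_one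
  obtain rfl : j = i := by
    by_contra hji
    have hfiber := mk_preimage_rowInterval_self i f
    rw [h, mk_preimage_rowInterval_of_ne hji] at hfiber
    exact (nonempty_Icc.2 hf).ne_empty hfiber.symm
  have hIcc : Icc (f 0) (f 1) = Icc (g 0) (g 1) := by
    rw [← mk_preimage_rowInterval_self j, h, mk_preimage_rowInterval_self]
  obtain ⟨h0, h1⟩ := (Icc_eq_Icc_iff hf).1 hIcc
  have hfg : f = g := OrderHom.ext _ _ (funext (Fin.forall_fin_two.2 ⟨h0, h1⟩))
  rw [hfg]

end RowInterval

section TwoRowInterval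

variable {α : Type} [PartialOrder α]

/-- The interval of `Fin 2 × α` meeting both rows that is given by a chain
`f 0 ≤ f 1 ≤ f 2 ≤ f 3`: its bottom row is `[f 1, f 3]` and its top row is `[f 0, f 2]`. -/
def twoRowInterval (f : Fin 4 →o α) : Set (Fin 2 × α) :=
  {0} ×ˢ Icc (f 1) (f 3) ∪ {1} ×ˢ Icc (f 0) (f 2)

lemma mk_zero_preimage_twoRowInterval (f : Fin 4 →o α) :
    Prod.mk 0 ⁻¹' twoRowInterval f = Icc (f 1) (f 3) := by
  ext x
  simp [twoRowInterval]

lemma mk_one_preimage_twoRowInterval (f : Fin 4 →o α) :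
    Prod.mk 1 ⁻¹' twoRowInterval f = Icc (f 0) (f 2) := by
  ext x
  simp [twoRowInterval]

lemma mk_preimage_twoRowInterval_nonempty (f : Fin 4 →o α) (i : Fin 2) :
    (Prod.mk i ⁻¹' twoRowInterval f).Nonempty := by
  revert i
  rw [Fin.forall_fin_two, mk_zero_preimage_twoRowInterval, mk_one_preimage_twoRowInterval,
    nonempty_Icc, nonempty_Icc]
  exact ⟨f.monotone (by decide), f.monotone (by decide)⟩

lemma isConvexSet_twoRowInterval (f : Fin 4 →o α) : IsConvexSet (twoRowInterval f) := by
  have h01 : f 0 ≤ f 1 := f.monotone (by decide)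
  have h23 : f 2 ≤ f 3 := f.monotone (by decide)
  rintro ⟨i, x⟩ ⟨j, y⟩ ⟨k, z⟩ hx hz ⟨hij, hxy⟩ ⟨hjk, hyz⟩
  simp only [twoRowInterval, mem_union, mem_prod, mem_singleton_iff, mem_Icc] at hx hz ⊢
  dsimp only at hij hjk hxy hyz
  grind

lemma isIntervalSet_twoRowInterval (f : Fin 4 →o α) : IsIntervalSet (twoRowInterval f) := by
  have h12 : f 1 ≤ f 2 := f.monotone (by decide)
  have bottom_mem : (0, f 1) ∈ twoRowInterval f :=
    .inl ⟨rfl, le_rfl, f.monotone (by decide)⟩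
  have top_mem : (1, f 2) ∈ twoRowInterval f :=
    .inr ⟨rfl, f.monotone (by decide), le_rfl⟩
  refine ⟨⟨_, bottom_mem⟩, isConvexSet_twoRowInterval f,
    isConnectedSet_of_forall_le_or_le bottom_mem top_mem ⟨zero_le_one, h12⟩ ?_⟩
  rintro ⟨i, x⟩ (⟨hi, hx⟩ | ⟨hi, hx⟩)
  · exact .inl ⟨hi.ge, hx.1⟩
  · exact .inr ⟨hi.le, hx.2⟩

lemma twoRowInterval_injective : Function.Injective (twoRowInterval (α := α)) := by
  intro f g h
  have hbottom : Icc (f 1) (f 3) = Icc (g 1) (g 3) := by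
    rw [← mk_zero_preimage_twoRowInterval, h, mk_zero_preimage_twoRowInterval]
  have htop : Icc (f 0) (f 2) = Icc (g 0) (g 2) := by
    rw [← mk_one_preimage_twoRowInterval, h, mk_one_preimage_twoRowInterval]
  obtain ⟨h1, h3⟩ := (Icc_eq_Icc_iff (f.monotone (by decide))).1 hbottom
  obtain ⟨h0, h2⟩ := (Icc_eq_Icc_iff (f.monotone (by decide))).1 htop
  ext i
  fin_cases i <;> assumption

lemma rowInterval_ne_twoRowInterval (i : Fin 2) (f : Fin 2 →o α) (g : Fin 4 →o α) :
    rowInterval i f ≠ twoRowInterval g := by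
  obtain ⟨j, hji⟩ := exists_ne i
  intro h
  have hfiber := mk_preimage_twoRowInterval_nonempty g j
  rw [← h, mk_preimage_rowInterval_of_ne hji.symm] at hfiber
  exact not_nonempty_empty hfiber

end TwoRowInterval

section Classification

variable {ι α : Type}

lemma IsConvexSet.ordConnected_mk_preimage [PartialOrder ι] [PartialOrder α]
    {I : Set (ι × α)} (hI : IsConvexSet I) (i : ι) : (Prod.mk i ⁻¹' I).OrdConnected :=
  (isConvexSet_iff_ordConnected.1 hI).preimage_mono fun _ _ hxy ↦ ⟨le_rfl, hxy⟩

lemma IsConnectedSet.exists_mk_zero_mem_mk_one_mem_le [PartialOrder α] {I : Set (Fin 2 × α)}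
    (hI : IsConnectedSet I) (hbottom : (Prod.mk 0 ⁻¹' I).Nonempty)
    (htop : (Prod.mk 1 ⁻¹' I).Nonempty) : ∃ x y, (0, x) ∈ I ∧ (1, y) ∈ I ∧ x ≤ y := by
  obtain ⟨a, ha⟩ := hbottom
  obtain ⟨b, hb⟩ := htop
  obtain ⟨⟨i, x⟩, hx, ⟨j, y⟩, hy, hi, hj, hxy⟩ :=
    hI.exists_comparable_of_mem_of_notMem (U := {p | p.1 = 0}) ha hb (by simp) (by simp)
  obtain rfl : i = 0 := hi
  obtain rfl : j = 1 := Fin.eq_one_of_ne_zero j hj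
  obtain hle | hle := hxy
  · exact ⟨x, y, hx, hy, hle.2⟩
  · exact absurd hle.1 (by simp)

variable [LinearOrder α] [Finite α]

lemma IsConvexSet.exists_eq_rowInterval [PartialOrder ι] {I : Set (ι × α)} {i : ι}
    (hI : IsConvexSet I) (hi : (Prod.mk i ⁻¹' I).Nonempty)
    (hempty : ∀ j, i ≠ j → Prod.mk j ⁻¹' I = ∅) : ∃ f : Fin 2 →o α, rowInterval i f = I := by
  obtain ⟨a, b, hab, hrow⟩ := exists_eq_Icc_of_ordConnected (hI.ordConnected_mk_preimage i) hi
  refine ⟨⟨![a, b], by simpa using hab⟩, eq_of_forall_mk_preimage_eq fun j ↦ ?_⟩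
  obtain rfl | hij := eq_or_ne i j
  · simp [mk_preimage_rowInterval_self, hrow]
  · rw [mk_preimage_rowInterval_of_ne hij, hempty j hij]

lemma IsIntervalSet.exists_eq_twoRowInterval {I : Set (Fin 2 × α)} (hI : IsIntervalSet I)
    (hbottom : (Prod.mk 0 ⁻¹' I).Nonempty) (htop : (Prod.mk 1 ⁻¹' I).Nonempty) :
    ∃ f : Fin 4 →o α, twoRowInterval f = I := by
  obtain ⟨-, hconv, hconn⟩ := hI
  obtain ⟨x, y, hx, hy, hxy⟩ := hconn.exists_mk_zero_mem_mk_one_mem_le hbottom htop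
  obtain ⟨a, b, hab, hrow₀⟩ :=
    exists_eq_Icc_of_ordConnected (hconv.ordConnected_mk_preimage 0) hbottom
  obtain ⟨c, d, hcd, hrow₁⟩ :=
    exists_eq_Icc_of_ordConnected (hconv.ordConnected_mk_preimage 1) htop
  have mem_bottom (z : α) : (0, z) ∈ I ↔ a ≤ z ∧ z ≤ b := Set.ext_iff.1 hrow₀ z
  have mem_top (z : α) : (1, z) ∈ I ↔ c ≤ z ∧ z ≤ d := Set.ext_iff.1 hrow₁ z
  have ha : (0, a) ∈ I := (mem_bottom a).2 ⟨le_rfl, hab⟩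
  have hd : (1, d) ∈ I := (mem_top d).2 ⟨hcd, le_rfl⟩
  have had : a ≤ d := ((mem_bottom x).1 hx).1.trans (hxy.trans ((mem_top y).1 hy).2)
  have hca : c ≤ a := ((mem_top a).1 (hconv ha hd ⟨zero_le_one, le_rfl⟩ ⟨le_rfl, had⟩)).1
  have hdb : d ≤ b := ((mem_bottom d).1 (hconv ha hd ⟨le_rfl, had⟩ ⟨zero_le_one, le_rfl⟩)).2
  refine ⟨⟨![c, a, d, b], by simp [hca, had, hdb]⟩,
    eq_of_forall_mk_preimage_eq (Fin.forall_fin_two.2 ⟨?_, ?_⟩)⟩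
  · simp [mk_zero_preimage_twoRowInterval, hrow₀]
  · simp [mk_one_preimage_twoRowInterval, hrow₁]

lemma isIntervalSet_fin_two_prod_iff {I : Set (Fin 2 × α)} :
    IsIntervalSet I ↔ (∃ i, ∃ f : Fin 2 →o α, rowInterval i f = I) ∨
      ∃ f : Fin 4 →o α, twoRowInterval f = I := by
  constructor
  · intro hI
    obtain hbottom | hbottom := (Prod.mk 0 ⁻¹' I).eq_empty_or_nonempty <;>
      obtain htop | htop := (Prod.mk 1 ⁻¹' I).eq_empty_or_nonempty
    · have hempty : I = ∅ := eq_of_forall_mk_preimage_eq (Fin.forall_fin_two.2 ⟨hbottom, htop⟩)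
      exact absurd hempty hI.1.ne_empty
    · exact .inl ⟨1, hI.2.1.exists_eq_rowInterval htop (by simpa [Fin.forall_fin_two])⟩
    · exact .inl ⟨0, hI.2.1.exists_eq_rowInterval hbottom (by simpa [Fin.forall_fin_two])⟩
    · exact .inr (hI.exists_eq_twoRowInterval hbottom htop)
  · rintro (⟨i, f, rfl⟩ | ⟨f, rfl⟩)
    · exact isIntervalSet_rowInterval i f
    · exact isIntervalSet_twoRowInterval f

end Classification

section Count

variable (α : Type) [LinearOrder α] [Finite α]

lemma setOf_isIntervalSet_fin_two_prod :
    {I : Set (Fin 2 × α) | IsIntervalSet I} =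
      range (fun p : Fin 2 × (Fin 2 →o α) ↦ rowInterval p.1 p.2) ∪ range twoRowInterval := by
  ext I
  simp [isIntervalSet_fin_two_prod_iff]

lemma ncard_isIntervalSet_fin_two_prod :
    {I : Set (Fin 2 × α) | IsIntervalSet I}.ncard =
      2 * (Nat.card α).multichoose 2 + (Nat.card α).multichoose 4 := by
  have hdisj : Disjoint (range fun p : Fin 2 × (Fin 2 →o α) ↦ rowInterval p.1 p.2)
      (range twoRowInterval) := by
    rw [disjoint_left]
    rintro _ ⟨p, rfl⟩ ⟨g, hg⟩
    exact rowInterval_ne_twoRowInterval p.1 p.2 g hg.symm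
  rw [setOf_isIntervalSet_fin_two_prod, ncard_union_eq hdisj, ← Nat.card_coe_set_eq,
    ← Nat.card_coe_set_eq, Nat.card_range_of_injective rowInterval_injective,
    Nat.card_range_of_injective twoRowInterval_injective, Nat.card_prod, Nat.card_fin,
    natCard_fin_orderHom, natCard_fin_orderHom]

theorem card_intervals_two_rows_general :
    {I : Set (Fin 2 × α) | IsIntervalSet I}.ncard =
      Nat.card α * (Nat.card α + 1) * (Nat.card α ^ 2 + 5 * Nat.card α + 30) / 24 := by
  rw [ncard_isIntervalSet_fin_two_prod]
  generalize Nat.card α = n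
  have hpairs : 2 * n.multichoose 2 = n * (n + 1) := by
    simpa [Nat.ascFactorial, mul_comm] using factorial_mul_multichoose n 2
  have hquads : 24 * n.multichoose 4 = n * (n + 1) * (n + 2) * (n + 3) := by
    have h := factorial_mul_multichoose n 4
    simp only [Nat.ascFactorial, Nat.factorial] at h
    linarith
  refine (Nat.div_eq_of_eq_mul_right (by norm_num) ?_).symm
  linarith

end Count

/-- The number of intervals of `Fin 2 × Fin n` equals
`n (n+1) (n² + 5n + 30) / 24`. -/
theorem card_intervals_two_rows (n : ℕ) (hn : 0 < n) :
    {I : Set (Fin 2 × Fin n) | IsIntervalSet I}.ncard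
      = n * (n + 1) * (n ^ 2 + 5 * n + 30) / 24 := by
  simpa using card_intervals_two_rows_general (Fin n)
end
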